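/- Let α = 0, f = z². As graded vector spaces, Ext¹_A(X, Y), Ext¹_A(Y, X), Ext¹_A(X, X), and Ext¹_A(Y, Y) are each one-dimensional, concentrated in degree 0, where X = A/(x,z)A and Y = (A/(y,z−1)A)⟨1⟩. -/

import Mathlib

open Polynomial

noncomputable section

/-- The defining relations of the generalized Weyl algebra `A(f)` over `k[z]` with
`σ(z) = z + 1`: `xz = σ(z)x`, `yz = σ⁻¹(z)y`, `xy = f`, `yx = σ⁻¹(f)`.
Generators: `0 ↦ x`, `1 ↦ y`, `2 ↦ z`. -/
inductive gwaRel (k : Type) [Field k] (f : Polynomial k) :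
    FreeAlgebra k (Fin 3) → FreeAlgebra k (Fin 3) → Prop
  | xz : gwaRel k f (FreeAlgebra.ι k 0 * FreeAlgebra.ι k 2)
      ((FreeAlgebra.ι k 2 + 1) * FreeAlgebra.ι k 0)
  | yz : gwaRel k f (FreeAlgebra.ι k 1 * FreeAlgebra.ι k 2)
      ((FreeAlgebra.ι k 2 - 1) * FreeAlgebra.ι k 1)
  | xy : gwaRel k f (FreeAlgebra.ι k 0 * FreeAlgebra.ι k 1)
      (aeval (FreeAlgebra.ι k 2) f)
  | yx : gwaRel k f (FreeAlgebra.ι k 1 * FreeAlgebra.ι k 0)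
      (aeval (FreeAlgebra.ι k 2) (f.comp (X - 1)))

/-- The generalized Weyl algebra `A(f) = k[z]⟨x,y⟩ / (xz-σ(z)x, yz-σ⁻¹(z)y, xy-f, yx-σ⁻¹(f))`. -/
abbrev GWA (k : Type) [Field k] (f : Polynomial k) := RingQuot (gwaRel k f)

def gwaX (k : Type) [Field k] (f : Polynomial k) : GWA k f :=
  RingQuot.mkAlgHom k (gwaRel k f) (FreeAlgebra.ι k 0)

def gwaY (k : Type) [Field k] (f : Polynomial k) : GWA k f :=
  RingQuot.mkAlgHom k (gwaRel k f) (FreeAlgebra.ι k 1)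

def gwaZ (k : Type) [Field k] (f : Polynomial k) : GWA k f :=
  RingQuot.mkAlgHom k (gwaRel k f) (FreeAlgebra.ι k 2)

/-- The canonical `k[z]`-module generator of the degree-`n` component of `A(f)`:
`xⁿ` for `n ≥ 0` and `y⁻ⁿ` for `n < 0`. -/
def gwaMon (k : Type) [Field k] (f : Polynomial k) (n : ℤ) : GWA k f :=
  if 0 ≤ n then gwaX k f ^ n.toNat else gwaY k f ^ (-n).toNat

/-- The degree-`n` component of `A(f)` (as a `k`-subspace): the left `k[z]`-span of the
canonical monomial `mₙ`. -/
def gwaComp (k : Type) [Field k] (f : Polynomial k) (n : ℤ) : Submodule k (GWA k f) :=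
  Submodule.span k {w | ∃ q : Polynomial k, w = aeval (gwaZ k f) q * gwaMon k f n}

variable (k : Type) [Field k] (f : Polynomial k)

/-- The degree-`n` component of the shifted graded quotient module `(A(f)/I)⟨s⟩`:
the image of `A(f)_{n−s}` under the quotient map. -/
def qgrade (I : Submodule (GWA k f)ᵐᵒᵖ (GWA k f)) (s n : ℤ) :
    Set (GWA k f ⧸ I) :=
  Submodule.Quotient.mk '' ((gwaComp k f (n - s) : Set (GWA k f)))

/-- `gE` is a `ℤ`-grading of the right `A(f)`-module `E`: the components are additive
subgroups, every element decomposes as a finite sum of homogeneous components, such a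
decomposition is unique, and `E_n · A_i ⊆ E_{n+i}`. -/
def IsGrading (E : ModuleCat.{0} (GWA k f)ᵐᵒᵖ) (gE : ℤ → Set E) : Prop :=
  (∀ n, (0 : E) ∈ gE n) ∧
  (∀ n, ∀ a ∈ gE n, ∀ b ∈ gE n, a + b ∈ gE n) ∧
  (∀ n, ∀ a ∈ gE n, -a ∈ gE n) ∧
  (∀ e : E, ∃ (s : Finset ℤ) (cc : ℤ → E), (∀ n, cc n ∈ gE n) ∧ e = ∑ n ∈ s, cc n) ∧
  (∀ (s : Finset ℤ) (cc : ℤ → E), (∀ n ∈ s, cc n ∈ gE n) →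
    ∑ n ∈ s, cc n = 0 → ∀ n ∈ s, cc n = 0) ∧
  (∀ n i : ℤ, ∀ e ∈ gE n, ∀ a ∈ gwaComp k f i, (MulOpposite.op a) • e ∈ gE (n + i))

/-- `(E, gE, ι, π)` is a graded extension `0 → (A/I_T)⟨t+d⟩ → E → (A/I_S)⟨s⟩ → 0` in the
category of graded right `A(f)`-modules (all maps of degree zero): here `I_T, t` define
the graded module `T = (A/I_T)⟨t⟩`, `I_S, s` define `S = (A/I_S)⟨s⟩`, and `d` is the
degree of the shift applied to `T`. -/
def IsGradedExt (IT : Submodule (GWA k f)ᵐᵒᵖ (GWA k f)) (t : ℤ)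
    (IS : Submodule (GWA k f)ᵐᵒᵖ (GWA k f)) (s : ℤ) (d : ℤ)
    (E : ModuleCat.{0} (GWA k f)ᵐᵒᵖ) (gE : ℤ → Set E)
    (ι : (GWA k f ⧸ IT) →ₗ[(GWA k f)ᵐᵒᵖ] E)
    (π : E →ₗ[(GWA k f)ᵐᵒᵖ] (GWA k f ⧸ IS)) : Prop :=
  IsGrading k f E gE ∧ Function.Injective ι ∧ Function.Surjective π ∧
  LinearMap.range ι = LinearMap.ker π ∧
  (∀ n, ι '' qgrade k f IT t (n - d) ⊆ gE n) ∧
  (∀ n, π '' gE n ⊆ qgrade k f IS s n)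

/-- The graded extension splits (by a degree-zero section). -/
def GradedSplits (IS : Submodule (GWA k f)ᵐᵒᵖ (GWA k f)) (s : ℤ)
    (E : ModuleCat.{0} (GWA k f)ᵐᵒᵖ) (gE : ℤ → Set E)
    (π : E →ₗ[(GWA k f)ᵐᵒᵖ] (GWA k f ⧸ IS)) : Prop :=
  ∃ sec : (GWA k f ⧸ IS) →ₗ[(GWA k f)ᵐᵒᵖ] E,
    π.comp sec = LinearMap.id ∧ ∀ n, sec '' qgrade k f IS s n ⊆ gE n

/-- `Ext¹_A(S, T) = 0` (as a graded vector space): every graded extension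
`0 → T⟨d⟩ → E → S → 0` splits, for every degree `d`. -/
def ExtVanishes (IT : Submodule (GWA k f)ᵐᵒᵖ (GWA k f)) (t : ℤ)
    (IS : Submodule (GWA k f)ᵐᵒᵖ (GWA k f)) (s : ℤ) : Prop :=
  ∀ (d : ℤ) (E : ModuleCat.{0} (GWA k f)ᵐᵒᵖ) (gE : ℤ → Set E)
    (ι : (GWA k f ⧸ IT) →ₗ[(GWA k f)ᵐᵒᵖ] E)
    (π : E →ₗ[(GWA k f)ᵐᵒᵖ] (GWA k f ⧸ IS)),
    IsGradedExt k f IT t IS s d E gE ι π → GradedSplits k f IS s E gE π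

/-- `Ext¹_A(S, T) = k`, concentrated in degree `0` (as a graded vector space):
every graded extension `0 → T⟨d⟩ → E → S → 0` with `d ≠ 0` splits; there is a nonsplit
graded extension in degree `0`; and any two nonsplit graded extensions in degree `0`
are equivalent up to a nonzero scalar `c ∈ k^×` (there is a degree-zero homomorphism of
extensions which is `c·id` on `T`; such extensions represent proportional classes, so
the degree-`0` component of `Ext¹` is one-dimensional). -/
def ExtOneDim (IT : Submodule (GWA k f)ᵐᵒᵖ (GWA k f)) (t : ℤ)
    (IS : Submodule (GWA k f)ᵐᵒᵖ (GWA k f)) (s : ℤ) : Prop :=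
  (∀ (d : ℤ), d ≠ 0 → ∀ (E : ModuleCat.{0} (GWA k f)ᵐᵒᵖ) (gE : ℤ → Set E)
    (ι : (GWA k f ⧸ IT) →ₗ[(GWA k f)ᵐᵒᵖ] E)
    (π : E →ₗ[(GWA k f)ᵐᵒᵖ] (GWA k f ⧸ IS)),
    IsGradedExt k f IT t IS s d E gE ι π → GradedSplits k f IS s E gE π) ∧
  (∃ (E : ModuleCat.{0} (GWA k f)ᵐᵒᵖ) (gE : ℤ → Set E)
    (ι : (GWA k f ⧸ IT) →ₗ[(GWA k f)ᵐᵒᵖ] E)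
    (π : E →ₗ[(GWA k f)ᵐᵒᵖ] (GWA k f ⧸ IS)),
    IsGradedExt k f IT t IS s 0 E gE ι π ∧ ¬GradedSplits k f IS s E gE π) ∧
  (∀ (E : ModuleCat.{0} (GWA k f)ᵐᵒᵖ) (gE : ℤ → Set E)
    (ι : (GWA k f ⧸ IT) →ₗ[(GWA k f)ᵐᵒᵖ] E)
    (π : E →ₗ[(GWA k f)ᵐᵒᵖ] (GWA k f ⧸ IS)),
    IsGradedExt k f IT t IS s 0 E gE ι π → ¬GradedSplits k f IS s E gE π →
    ∀ (E' : ModuleCat.{0} (GWA k f)ᵐᵒᵖ) (gE' : ℤ → Set E')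
      (ι' : (GWA k f ⧸ IT) →ₗ[(GWA k f)ᵐᵒᵖ] E')
      (π' : E' →ₗ[(GWA k f)ᵐᵒᵖ] (GWA k f ⧸ IS)),
      IsGradedExt k f IT t IS s 0 E' gE' ι' π' → ¬GradedSplits k f IS s E' gE' π' →
      ∃ c : k, c ≠ 0 ∧ ∃ ψ : E →ₗ[(GWA k f)ᵐᵒᵖ] E',
        (∀ w : GWA k f ⧸ IT,
          ψ (ι w) = ι' ((MulOpposite.op (algebraMap k (GWA k f) c)) • w)) ∧
        (∀ e : E, π' (ψ e) = π e) ∧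
        (∀ n, ψ '' gE n ⊆ gE' n))

section Structure

variable {k f}

theorem gwaX_mul_gwaZ : gwaX k f * gwaZ k f = (gwaZ k f + 1) * gwaX k f := by
  have := RingQuot.mkAlgHom_rel k (gwaRel.xz (k := k) (f := f))
  simpa [gwaX, gwaZ] using this

theorem gwaY_mul_gwaZ : gwaY k f * gwaZ k f = (gwaZ k f - 1) * gwaY k f := by
  have := RingQuot.mkAlgHom_rel k (gwaRel.yz (k := k) (f := f))
  simpa [gwaY, gwaZ] using this

theorem gwaX_mul_gwaY : gwaX k f * gwaY k f = aeval (gwaZ k f) f := by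
  have := RingQuot.mkAlgHom_rel k (gwaRel.xy (k := k) (f := f))
  simpa [gwaX, gwaY, gwaZ, aeval_algHom_apply] using this

theorem gwaY_mul_gwaX : gwaY k f * gwaX k f = aeval (gwaZ k f) (f.comp (X - 1)) := by
  have := RingQuot.mkAlgHom_rel k (gwaRel.yx (k := k) (f := f))
  rw [map_mul, ← aeval_algHom_apply] at this
  exact this

theorem mul_aeval_of_mul_eq {A : Type*} [Ring A] [Algebra k A] {w z : A} {r : k[X]}
    (h : w * z = aeval z r * w) (q : k[X]) : w * aeval z q = aeval z (q.comp r) * w := by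
  induction q using Polynomial.induction_on with
  | C a => simp [Algebra.commutes]
  | add p q hp hq => simp [mul_add, add_mul, hp, hq]
  | monomial n a ih =>
    rw [pow_succ, ← mul_assoc, map_mul, ← mul_assoc, ih, aeval_X, mul_assoc, h,
      mul_comp (C a * X ^ n), X_comp, map_mul, mul_assoc]

theorem gwaX_pow_mul_aeval (j : ℕ) (q : k[X]) :
    gwaX k f ^ j * aeval (gwaZ k f) q =
      aeval (gwaZ k f) (q.comp (X + (j : k[X]))) * gwaX k f ^ j := by
  apply mul_aeval_of_mul_eq
  induction j with
  | zero => simp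
  | succ j ih =>
    rw [pow_succ, mul_assoc, gwaX_mul_gwaZ, ← mul_assoc, mul_add, ih]
    simp only [map_add, aeval_X, map_natCast, Nat.cast_succ, map_one]
    noncomm_ring

theorem gwaY_pow_mul_aeval (j : ℕ) (q : k[X]) :
    gwaY k f ^ j * aeval (gwaZ k f) q =
      aeval (gwaZ k f) (q.comp (X - (j : k[X]))) * gwaY k f ^ j := by
  apply mul_aeval_of_mul_eq
  induction j with
  | zero => simp
  | succ j ih =>
    rw [pow_succ, mul_assoc, gwaY_mul_gwaZ, ← mul_assoc, mul_sub, ih]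
    simp only [map_sub, aeval_X, map_natCast, Nat.cast_succ, map_one, map_add,
      sub_mul, add_mul, one_mul, mul_one, mul_assoc]
    abel

theorem gwaMon_natCast (j : ℕ) : gwaMon k f j = gwaX k f ^ j := by
  simp [gwaMon]

theorem gwaMon_neg_natCast (j : ℕ) : gwaMon k f (-j) = gwaY k f ^ j := by
  rcases Nat.eq_zero_or_pos j with rfl | hj
  · simp [gwaMon]
  · have : ¬ (0 : ℤ) ≤ -j := by omega
    simp only [gwaMon, if_neg this, neg_neg, Int.toNat_natCast]

theorem gwaMon_mul_aeval (n : ℤ) (q : k[X]) :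
    gwaMon k f n * aeval (gwaZ k f) q =
      aeval (gwaZ k f) (q.comp (X + (n : k[X]))) * gwaMon k f n := by
  obtain ⟨j, rfl | rfl⟩ := n.eq_nat_or_neg
  · simpa [gwaMon_natCast] using gwaX_pow_mul_aeval j q
  · simpa [gwaMon_neg_natCast, sub_eq_add_neg] using gwaY_pow_mul_aeval j q

theorem mem_gwaComp {n : ℤ} {w : GWA k f} :
    w ∈ gwaComp k f n ↔ ∃ q : k[X], w = aeval (gwaZ k f) q * gwaMon k f n := by
  refine ⟨fun h => ?_, fun h => Submodule.subset_span h⟩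
  induction h using Submodule.span_induction with
  | mem w h => exact h
  | zero => exact ⟨0, by simp⟩
  | add u v _ _ hu hv =>
    obtain ⟨p, rfl⟩ := hu
    obtain ⟨q, rfl⟩ := hv
    exact ⟨p + q, by simp [add_mul]⟩
  | smul c u _ hu =>
    obtain ⟨p, rfl⟩ := hu
    exact ⟨c • p, by simp⟩

theorem aeval_mem_gwaComp_zero (q : k[X]) : aeval (gwaZ k f) q ∈ gwaComp k f 0 :=
  mem_gwaComp.2 ⟨q, by simp [gwaMon]⟩

theorem mem_gwaComp_zero {w : GWA k f} :
    w ∈ gwaComp k f 0 ↔ ∃ q : k[X], w = aeval (gwaZ k f) q := by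
  simp [mem_gwaComp, gwaMon]

theorem one_mem_gwaComp : (1 : GWA k f) ∈ gwaComp k f 0 :=
  mem_gwaComp_zero.2 ⟨1, by simp⟩

theorem gwaX_mem_gwaComp : gwaX k f ∈ gwaComp k f 1 :=
  mem_gwaComp.2 ⟨1, by simp [gwaMon]⟩

theorem gwaY_mem_gwaComp : gwaY k f ∈ gwaComp k f (-1) :=
  mem_gwaComp.2 ⟨1, by simp [gwaMon]⟩

theorem mul_aeval_mem_gwaComp {n : ℤ} {w : GWA k f} (hw : w ∈ gwaComp k f n) (q : k[X]) :
    w * aeval (gwaZ k f) q ∈ gwaComp k f n := by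
  obtain ⟨p, rfl⟩ := mem_gwaComp.1 hw
  exact mem_gwaComp.2 ⟨_, by rw [mul_assoc, gwaMon_mul_aeval, ← mul_assoc, ← map_mul]⟩

theorem mul_gwaX_mem_gwaComp {n : ℤ} {w : GWA k f} (hw : w ∈ gwaComp k f n) :
    w * gwaX k f ∈ gwaComp k f (n + 1) := by
  obtain ⟨p, rfl⟩ := mem_gwaComp.1 hw
  obtain ⟨j, rfl | rfl⟩ := n.eq_nat_or_neg
  · refine mem_gwaComp.2 ⟨p, ?_⟩
    rw [← Nat.cast_succ, gwaMon_natCast, gwaMon_natCast, pow_succ, mul_assoc]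
  · cases j with
    | zero => exact mem_gwaComp.2 ⟨p, by simp [gwaMon]⟩
    | succ j =>
      refine mem_gwaComp.2 ⟨p * ((f.comp (X - 1)).comp (X - (j : k[X]))), ?_⟩
      rw [show (-((j + 1 : ℕ) : ℤ) + 1) = -j by push_cast; ring, gwaMon_neg_natCast,
        gwaMon_neg_natCast, pow_succ, mul_assoc, mul_assoc, gwaY_mul_gwaX, gwaY_pow_mul_aeval,
        map_mul, mul_assoc]

theorem mul_gwaY_mem_gwaComp {n : ℤ} {w : GWA k f} (hw : w ∈ gwaComp k f n) :
    w * gwaY k f ∈ gwaComp k f (n - 1) := by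
  obtain ⟨p, rfl⟩ := mem_gwaComp.1 hw
  obtain ⟨j, rfl | rfl⟩ := n.eq_nat_or_neg
  · cases j with
    | zero => exact mem_gwaComp.2 ⟨p, by simp [gwaMon]⟩
    | succ j =>
      refine mem_gwaComp.2 ⟨p * (f.comp (X + (j : k[X]))), ?_⟩
      rw [show (((j + 1 : ℕ) : ℤ) - 1) = j by push_cast; ring, gwaMon_natCast,
        gwaMon_natCast, pow_succ, mul_assoc, mul_assoc, gwaX_mul_gwaY, gwaX_pow_mul_aeval,
        map_mul, mul_assoc]
  · refine mem_gwaComp.2 ⟨p, ?_⟩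
    rw [show (-(j : ℤ) - 1) = -((j + 1 : ℕ) : ℤ) by push_cast; ring, gwaMon_neg_natCast,
      gwaMon_neg_natCast, pow_succ, mul_assoc]

theorem mul_mem_gwaComp {n i : ℤ} {w v : GWA k f} (hw : w ∈ gwaComp k f n)
    (hv : v ∈ gwaComp k f i) : w * v ∈ gwaComp k f (n + i) := by
  obtain ⟨q, rfl⟩ := mem_gwaComp.1 hv
  rw [← mul_assoc]
  replace hw := mul_aeval_mem_gwaComp hw q
  generalize w * aeval (gwaZ k f) q = u at hw
  obtain ⟨j, rfl | rfl⟩ := i.eq_nat_or_neg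
  · rw [gwaMon_natCast]
    clear hv
    induction j with
    | zero => simpa using hw
    | succ j ih =>
      have := mul_gwaX_mem_gwaComp ih
      rw [pow_succ, ← mul_assoc]
      convert this using 2
      push_cast; ring
  · rw [gwaMon_neg_natCast]
    clear hv
    induction j with
    | zero => simpa using hw
    | succ j ih =>
      have := mul_gwaY_mem_gwaComp ih
      rw [pow_succ, ← mul_assoc]
      convert this using 2
      push_cast; ring

theorem iSup_gwaComp : ⨆ n, gwaComp k f n = ⊤ := by
  have step (b : FreeAlgebra k (Fin 3)) : ∀ w ∈ ⨆ n, gwaComp k f n,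
      w * RingQuot.mkAlgHom k (gwaRel k f) b ∈ ⨆ n, gwaComp k f n := by
    induction b using FreeAlgebra.induction with
    | grade0 r =>
      intro w hw
      rw [AlgHom.commutes, ← Algebra.commutes, ← Algebra.smul_def]
      exact Submodule.smul_mem _ _ hw
    | grade1 i =>
      intro w hw
      induction hw using Submodule.iSup_induction' with
      | mem n w hw =>
        fin_cases i
        · exact Submodule.mem_iSup_of_mem _ (mul_gwaX_mem_gwaComp hw)
        · exact Submodule.mem_iSup_of_mem _ (mul_gwaY_mem_gwaComp hw)
        · refine Submodule.mem_iSup_of_mem n ?_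
          have := mul_aeval_mem_gwaComp hw X
          rwa [aeval_X] at this
      | zero => simp
      | add u v _ _ hu hv => rw [add_mul]; exact add_mem hu hv
    | mul a b ha hb =>
      intro w hw
      rw [map_mul, ← mul_assoc]
      exact hb _ (ha _ hw)
    | add a b ha hb =>
      intro w hw
      rw [map_add, mul_add]
      exact add_mem (ha _ hw) (hb _ hw)
  refine eq_top_iff.2 fun a _ => ?_
  obtain ⟨b, rfl⟩ := RingQuot.mkAlgHom_surjective k (gwaRel k f) a
  simpa using step b 1 (Submodule.mem_iSup_of_mem 0 one_mem_gwaComp)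

theorem exists_sum_gwaComp (s : ℤ) (a : GWA k f) :
    ∃ (S : Finset ℤ) (cc : ℤ → GWA k f), (∀ n, cc n ∈ gwaComp k f (n - s)) ∧
      a = ∑ n ∈ S, cc n := by
  have ha : a ∈ ⨆ n, gwaComp k f (n - s) := by
    have h : ⨆ n, gwaComp k f (n - s) = ⨆ n, gwaComp k f n :=
      (Equiv.subRight s).iSup_comp (g := gwaComp k f)
    rw [h, iSup_gwaComp]
    trivial
  obtain ⟨φ, hφ, rfl⟩ := (Submodule.mem_iSup_iff_exists_finsupp _ _).1 ha
  exact ⟨φ.support, φ, hφ, rfl⟩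

/-- Elements of degree `i` intertwine right multiplication by `z` and left multiplication
by `z + i`. -/
theorem mul_aeval_of_mem_gwaComp {i : ℤ} {a : GWA k f} (ha : a ∈ gwaComp k f i) (q : k[X]) :
    a * aeval (gwaZ k f) q = aeval (gwaZ k f) (q.comp (X + (i : k[X]))) * a := by
  obtain ⟨p, rfl⟩ := mem_gwaComp.1 ha
  rw [mul_assoc, gwaMon_mul_aeval, ← mul_assoc, ← mul_assoc, ← map_mul, ← map_mul, mul_comm]

theorem mul_gwaZ_of_mem_gwaComp {i : ℤ} {a : GWA k f} (ha : a ∈ gwaComp k f i) :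
    a * gwaZ k f = (gwaZ k f + i) * a := by
  simpa using mul_aeval_of_mem_gwaComp ha X

end Structure

section Gradings

variable {k f}

/-- The homomorphism of right modules `A → E`, `a ↦ e · a`. -/
def orbitMap {E : Type*} [AddCommGroup E] [Module (GWA k f)ᵐᵒᵖ E] (e : E) :
    GWA k f →ₗ[(GWA k f)ᵐᵒᵖ] E where
  toFun a := MulOpposite.op a • e
  map_add' a b := by rw [MulOpposite.op_add, add_smul]
  map_smul' r a := by
    rw [RingHom.id_apply, ← mul_smul]
    rfl

theorem orbitMap_apply {E : Type*} [AddCommGroup E] [Module (GWA k f)ᵐᵒᵖ E] (e : E)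
    (a : GWA k f) : orbitMap e a = MulOpposite.op a • e := rfl

theorem mul_mem_of_mem {I : Submodule (GWA k f)ᵐᵒᵖ (GWA k f)} {a : GWA k f} (ha : a ∈ I)
    (b : GWA k f) : a * b ∈ I :=
  I.smul_mem (MulOpposite.op b) ha

theorem op_smul_mk (I : Submodule (GWA k f)ᵐᵒᵖ (GWA k f)) (a b : GWA k f) :
    MulOpposite.op b • (Submodule.Quotient.mk a : GWA k f ⧸ I) =
      Submodule.Quotient.mk (a * b) := rfl

/-- On the degree-`n` part of `(A/I)⟨s⟩`, the element `z - n` acts nilpotently as soon as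
`(z - s)² ∈ I`; hence the homogeneous parts are independent. -/
theorem qgrade_sum_eq_zero [CharZero k] {I : Submodule (GWA k f)ᵐᵒᵖ (GWA k f)} {s : ℤ}
    (hI : (gwaZ k f - s) ^ 2 ∈ I) (S : Finset ℤ) (cc : ℤ → GWA k f ⧸ I)
    (hcc : ∀ n ∈ S, cc n ∈ qgrade k f I s n) (h0 : ∑ n ∈ S, cc n = 0) :
    ∀ n ∈ S, cc n = 0 := by
  let Z : Module.End k (GWA k f ⧸ I) := Algebra.lsmul k k _ (MulOpposite.op (gwaZ k f))
  have hind : iSupIndep fun n : ℤ => Z.genEigenspace (n : k) 2 :=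
    (Z.independent_genEigenspace 2).comp Int.cast_injective
  refine (iSupIndep_iff_finsetSum_eq_zero_imp_eq_zero _).1 hind S cc (fun n hn => ?_) h0
  obtain ⟨a, ha, hac⟩ := hcc n hn
  have hz (w : GWA k f ⧸ I) : (Z - (n : k) • 1) w = MulOpposite.op (gwaZ k f - n) • w := by
    change MulOpposite.op (gwaZ k f) • w - (n : k) • w = _
    rw [MulOpposite.op_sub, sub_smul, MulOpposite.op_intCast, Int.cast_smul_eq_zsmul,
      Int.cast_smul_eq_zsmul]
  refine (Module.End.mem_genEigenspace_nat (k := 2)).2 ?_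
  rw [LinearMap.mem_ker, pow_two, Module.End.mul_apply, hz, hz, ← hac, op_smul_mk, op_smul_mk,
    mul_assoc, ← pow_two, Submodule.Quotient.mk_eq_zero]
  have := mul_aeval_of_mem_gwaComp ha ((X - (n : k[X])) ^ 2)
  have e : a * (gwaZ k f - n) ^ 2 = (gwaZ k f - s) ^ 2 * a := by
    convert this using 2
    · simp
    · simpa using congrArg (· ^ 2) (by abel : gwaZ k f - s = gwaZ k f + (n - s) - n)
  rw [e]
  exact mul_mem_of_mem hI a

theorem isGrading_qgrade [CharZero k] {I : Submodule (GWA k f)ᵐᵒᵖ (GWA k f)} {s : ℤ}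
    (hI : (gwaZ k f - s) ^ 2 ∈ I) :
    IsGrading k f (ModuleCat.of _ (GWA k f ⧸ I)) (qgrade k f I s) := by
  refine ⟨fun n => ⟨0, zero_mem _, rfl⟩, ?_, ?_, fun e => ?_, qgrade_sum_eq_zero hI, ?_⟩
  · rintro n _ ⟨a, ha, rfl⟩ _ ⟨b, hb, rfl⟩
    exact ⟨a + b, add_mem ha hb, rfl⟩
  · rintro n _ ⟨a, ha, rfl⟩
    exact ⟨-a, neg_mem ha, rfl⟩
  · obtain ⟨a, rfl⟩ := I.mkQ_surjective e
    obtain ⟨S, cc, hcc, rfl⟩ := exists_sum_gwaComp s a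
    exact ⟨S, fun n => I.mkQ (cc n), fun n => ⟨cc n, hcc n, rfl⟩, map_sum _ _ _⟩
  · rintro n i _ ⟨a, ha, rfl⟩ b hb
    refine ⟨a * b, ?_, rfl⟩
    have := mul_mem_gwaComp ha hb
    rwa [sub_add_eq_add_sub] at this

/-- A homogeneous element equals its component in any homogeneous decomposition. -/
theorem IsGrading.exists_eq_of_sum {E : ModuleCat.{0} (GWA k f)ᵐᵒᵖ} {gE : ℤ → Set E}
    (hE : IsGrading k f E gE) {n : ℤ} {x : E} (hx : x ∈ gE n) {S : Finset ℤ} {cc : ℤ → E}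
    (hcc : ∀ m, cc m ∈ gE m) (h : x = ∑ m ∈ S, cc m) :
    x = if n ∈ S then cc n else 0 := by
  obtain ⟨h0, hadd, hneg, -, hind, -⟩ := hE
  have key := hind (insert n S)
    (fun m => (if m ∈ S then cc m else 0) + if m = n then -x else 0) ?_ ?_ n
    (Finset.mem_insert_self _ _)
  · refine (add_neg_eq_zero.1 ?_).symm
    simpa using key
  · intro m _
    refine hadd m _ ?_ _ ?_
    · split_ifs
      exacts [hcc m, h0 m]
    · split_ifs with hm
      exacts [hm ▸ hneg n x hx, h0 m]
  · rw [Finset.sum_add_distrib, Finset.sum_ite_eq', if_pos (Finset.mem_insert_self _ _),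
      ← Finset.sum_filter, add_neg_eq_zero, h]
    refine Finset.sum_congr ?_ fun _ _ => rfl
    ext m
    simp only [Finset.mem_filter, Finset.mem_insert]
    tauto

end Gradings

section Extensions

variable {k f} {IT IS : Submodule (GWA k f)ᵐᵒᵖ (GWA k f)} {t s d : ℤ}
  {E : ModuleCat.{0} (GWA k f)ᵐᵒᵖ} {gE : ℤ → Set E}
  {ι : (GWA k f ⧸ IT) →ₗ[(GWA k f)ᵐᵒᵖ] E} {π : E →ₗ[(GWA k f)ᵐᵒᵖ] (GWA k f ⧸ IS)}

theorem smul_mem_of_eq (hE : IsGrading k f E gE) {n i m : ℤ} {e : E} (he : e ∈ gE n)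
    {a : GWA k f} (ha : a ∈ gwaComp k f i) (h : n + i = m) : MulOpposite.op a • e ∈ gE m :=
  h ▸ hE.2.2.2.2.2 n i e he a ha

theorem IsGradedExt.map_mk_mem (h : IsGradedExt k f IT t IS s d E gE ι π) {n i : ℤ}
    {a : GWA k f} (ha : a ∈ gwaComp k f i) (hi : i + t + d = n) :
    ι (Submodule.Quotient.mk a) ∈ gE n := by
  refine h.2.2.2.2.1 n ⟨_, ⟨a, ?_, rfl⟩, rfl⟩
  rwa [show n - d - t = i by omega]

theorem IsGradedExt.map_eq_zero (h : IsGradedExt k f IT t IS s d E gE ι π)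
    (w : GWA k f ⧸ IT) : π (ι w) = 0 := by
  have : ι w ∈ LinearMap.ker π := h.2.2.2.1 ▸ LinearMap.mem_range_self ι w
  exact this

theorem IsGradedExt.exists_lift [CharZero k] (h : IsGradedExt k f IT t IS s d E gE ι π)
    (hS : (gwaZ k f - s) ^ 2 ∈ IS) : ∃ e ∈ gE s, π e = Submodule.Quotient.mk 1 := by
  obtain ⟨e, he⟩ := h.2.2.1 (Submodule.Quotient.mk 1)
  obtain ⟨S, cc, hcc, rfl⟩ := h.1.2.2.2.1 e
  have h1 : (Submodule.Quotient.mk 1 : GWA k f ⧸ IS) ∈ qgrade k f IS s s :=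
    ⟨1, by simpa using one_mem_gwaComp, rfl⟩
  have := (isGrading_qgrade hS).exists_eq_of_sum (S := S) (cc := fun n => π (cc n)) h1
    (fun m => h.2.2.2.2.2 m ⟨_, hcc m, rfl⟩) (by rw [← he, map_sum])
  refine ⟨if s ∈ S then cc s else 0, ?_, ?_⟩
  · split_ifs
    exacts [hcc s, h.1.1 s]
  · rw [this]
    split_ifs <;> simp

theorem IsGradedExt.exists_of_map_eq_zero (h : IsGradedExt k f IT t IS s d E gE ι π) {n : ℤ}
    {x : E} (hx : x ∈ gE n) (hπ : π x = 0) :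
    ∃ a ∈ gwaComp k f (n - d - t), x = ι (Submodule.Quotient.mk a) := by
  have hx' : x ∈ LinearMap.range ι := h.2.2.2.1 ▸ hπ
  obtain ⟨w, rfl⟩ := hx'
  obtain ⟨a, rfl⟩ := IT.mkQ_surjective w
  obtain ⟨S, cc, hcc, rfl⟩ := exists_sum_gwaComp (t + d) a
  have := h.1.exists_eq_of_sum (S := S) (cc := fun m => ι (IT.mkQ (cc m))) hx
    (fun m => h.map_mk_mem (hcc m) (by ring)) (by rw [map_sum, map_sum])
  refine ⟨if n ∈ S then cc n else 0, ?_, ?_⟩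
  · rw [sub_sub, add_comm d t]
    split_ifs
    exacts [hcc n, zero_mem _]
  · rw [this]
    split_ifs
    · rfl
    · simp

theorem map_orbitMap {e : E} (he : π e = Submodule.Quotient.mk 1) (a : GWA k f) :
    π (orbitMap e a) = Submodule.Quotient.mk a := by
  rw [orbitMap_apply, map_smul, he, op_smul_mk, one_mul]

/-- A homogeneous lift of the generator of `A/I_S` which is annihilated by generators of
`I_S` splits the extension. -/
theorem IsGradedExt.splits {g h : GWA k f} (hext : IsGradedExt k f IT t IS s d E gE ι π)
    (hIS : IS = Submodule.span _ {g, h}) {e : E} (he : e ∈ gE s)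
    (hπ : π e = Submodule.Quotient.mk 1) (hg : MulOpposite.op g • e = 0)
    (hh : MulOpposite.op h • e = 0) : GradedSplits k f IS s E gE π := by
  refine ⟨Submodule.liftQ _ (orbitMap e) (hIS ▸ Submodule.span_le.2 ?_), ?_, ?_⟩
  · rintro _ (rfl | rfl)
    exacts [hg, hh]
  · refine LinearMap.ext fun w => ?_
    obtain ⟨a, rfl⟩ := Submodule.mkQ_surjective _ w
    exact map_orbitMap hπ a
  · rintro n _ ⟨_, ⟨a, ha, rfl⟩, rfl⟩
    exact smul_mem_of_eq hext.1 he ha (by ring)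

theorem op_gwaZ_smul_mk {n : ℤ} (hT : gwaZ k f - t ∈ IT) {a : GWA k f}
    (ha : a ∈ gwaComp k f (n - t)) :
    MulOpposite.op (gwaZ k f) • (Submodule.Quotient.mk a : GWA k f ⧸ IT) =
      (n : ℤ) • Submodule.Quotient.mk a := by
  rw [op_smul_mk, mul_gwaZ_of_mem_gwaComp ha, ← Submodule.Quotient.mk_smul,
    Submodule.Quotient.eq]
  convert mul_mem_of_mem hT a using 1
  push_cast
  rw [zsmul_eq_mul]
  noncomm_ring

/-- For `d ≠ 0` the eigenvalues of `z` on `S` and `T⟨d⟩` differ in every degree. -/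
theorem IsGradedExt.splits_of_ne_zero [CharZero k] {g : GWA k f} {ε : ℤ}
    (h : IsGradedExt k f IT t IS s d E gE ι π)
    (hIS : IS = Submodule.span _ {g, gwaZ k f - s}) (hg : g ∈ gwaComp k f ε)
    (hT : gwaZ k f - t ∈ IT) (hd : d ≠ 0) : GradedSplits k f IS s E gE π := by
  have hgS : g ∈ IS := hIS ▸ Submodule.subset_span (Set.mem_insert _ _)
  have hzS : gwaZ k f - s ∈ IS :=
    hIS ▸ Submodule.subset_span (Set.mem_insert_of_mem _ rfl)
  have hdk : (d : k) ≠ 0 := Int.cast_ne_zero.2 hd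
  have hz0 : gwaZ k f - s ∈ gwaComp k f 0 := by
    have := aeval_mem_gwaComp_zero (f := f) (X - (s : k[X]))
    rwa [map_sub, aeval_X, map_intCast] at this
  obtain ⟨e, he, hπ⟩ := h.exists_lift (by rw [pow_two]; exact mul_mem_of_mem hzS _)
  obtain ⟨a, ha, hea⟩ := h.exists_of_map_eq_zero (smul_mem_of_eq h.1 he hz0 (add_zero s))
    (by rw [← orbitMap_apply, map_orbitMap hπ, Submodule.Quotient.mk_eq_zero]; exact hzS)
  set b : GWA k f := (d : k)⁻¹ • a with hb
  have hb' : b ∈ gwaComp k f (s - d - t) := Submodule.smul_mem _ _ ha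
  have hdb : d • b = a := by
    rw [hb, ← Int.cast_smul_eq_zsmul k, smul_smul, mul_inv_cancel₀ hdk, one_smul]
  have he' : e + ι (Submodule.Quotient.mk b) ∈ gE s :=
    h.1.2.1 s _ he _ (h.map_mk_mem hb' (by ring))
  have hπ' : π (e + ι (Submodule.Quotient.mk b)) = Submodule.Quotient.mk 1 := by
    rw [map_add, h.map_eq_zero, add_zero, hπ]
  have hez : MulOpposite.op (gwaZ k f - s) • (e + ι (Submodule.Quotient.mk b)) = 0 := by
    rw [smul_add, hea, ← map_smul, MulOpposite.op_sub, sub_smul, op_gwaZ_smul_mk hT hb',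
      MulOpposite.op_intCast, Int.cast_smul_eq_zsmul, ← sub_smul, ← hdb, ← map_add,
      Submodule.Quotient.mk_smul, ← add_smul]
    simp
  generalize e + ι (Submodule.Quotient.mk b) = e₁ at he' hπ' hez
  refine h.splits hIS he' hπ' ?_ hez
  obtain ⟨u, hu, heu⟩ := h.exists_of_map_eq_zero (smul_mem_of_eq h.1 he' hg rfl)
    (by rw [← orbitMap_apply, map_orbitMap hπ', Submodule.Quotient.mk_eq_zero]; exact hgS)
  have h1 : MulOpposite.op (gwaZ k f - s - ε) • MulOpposite.op g • e₁ = 0 := by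
    rw [← mul_smul, ← MulOpposite.op_mul, show g * (gwaZ k f - s - ε) = (gwaZ k f - s) * g by
      have := mul_gwaZ_of_mem_gwaComp hg
      rw [mul_sub, mul_sub, this, ← (Int.cast_commute ε g).eq, ← (Int.cast_commute s g).eq,
        add_mul, sub_mul]
      abel, MulOpposite.op_mul, mul_smul, hez, smul_zero]
  rw [heu] at h1 ⊢
  have h2 : ι (Submodule.Quotient.mk u) = (0 : E) := by
    rw [← map_smul, sub_sub, MulOpposite.op_sub, sub_smul, op_gwaZ_smul_mk hT hu, ← Int.cast_add,
      MulOpposite.op_intCast, Int.cast_smul_eq_zsmul, ← sub_smul,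
      ← Submodule.Quotient.mk_smul, ← Int.cast_smul_eq_zsmul k] at h1
    have h3 := congrArg (MulOpposite.op (algebraMap k (GWA k f) (-(d : k)⁻¹)) • ·) h1
    simp only [smul_zero] at h3
    rw [← map_smul, op_smul_mk, ← Algebra.commutes, ← Algebra.smul_def, smul_smul] at h3
    convert h3
    rw [show s + ε - d - (s + ε) = -d by ring]
    simp [hdk]
  exact h2

end Extensions

section Proportional

variable {k f} {IT IS : Submodule (GWA k f)ᵐᵒᵖ (GWA k f)} {t s : ℤ} {h h' : GWA k f}

theorem exists_aeval_eq_add (s : ℤ) (p : k[X]) :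
    ∃ q : k[X], aeval (gwaZ k f) p =
      algebraMap k (GWA k f) (p.eval (s : k)) + (gwaZ k f - s) * aeval (gwaZ k f) q := by
  obtain ⟨q, hq⟩ := X_sub_C_dvd_sub_C_eval (a := (s : k)) (p := p)
  refine ⟨q, ?_⟩
  have := congrArg (aeval (gwaZ k f)) hq
  rw [map_sub, map_mul, map_sub, aeval_X, aeval_C, aeval_C, map_intCast] at this
  rw [← this, add_sub_cancel]

theorem IsGradedExt.exists_generator [CharZero k] {ε : ℤ}
    {E : ModuleCat.{0} (GWA k f)ᵐᵒᵖ} {gE : ℤ → Set E}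
    {ι : (GWA k f ⧸ IT) →ₗ[(GWA k f)ᵐᵒᵖ] E} {π : E →ₗ[(GWA k f)ᵐᵒᵖ] (GWA k f ⧸ IS)}
    (hext : IsGradedExt k f IT t IS s 0 E gE ι π) (hns : ¬ GradedSplits k f IS s E gE π)
    (hIS : IS = Submodule.span _ {h, h'}) (hS : gwaZ k f - s ∈ IS)
    (hh : h ∈ gwaComp k f (t - s)) (hh' : h' ∈ gwaComp k f ε) (hT : gwaZ k f - t ∈ IT)
    (hT' : ∀ a ∈ gwaComp k f (s + ε - t), a ∈ IT) :
    ∃ e ∈ gE s, π e = Submodule.Quotient.mk 1 ∧ MulOpposite.op h' • e = 0 ∧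
      ∃ c : k, c ≠ 0 ∧
        MulOpposite.op h • e = ι (Submodule.Quotient.mk (algebraMap k (GWA k f) c)) := by
  have hhS : h ∈ IS := hIS ▸ Submodule.subset_span (Set.mem_insert _ _)
  have hhS' : h' ∈ IS := hIS ▸ Submodule.subset_span (Set.mem_insert_of_mem _ rfl)
  obtain ⟨e, he, hπ⟩ := hext.exists_lift (by rw [pow_two]; exact mul_mem_of_mem hS _)
  obtain ⟨a, ha, hea⟩ := hext.exists_of_map_eq_zero
    (smul_mem_of_eq hext.1 he hh (add_sub_cancel s t))
    (by rw [← orbitMap_apply, map_orbitMap hπ, Submodule.Quotient.mk_eq_zero]; exact hhS)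
  obtain ⟨a', ha', hea'⟩ := hext.exists_of_map_eq_zero (smul_mem_of_eq hext.1 he hh' rfl)
    (by rw [← orbitMap_apply, map_orbitMap hπ, Submodule.Quotient.mk_eq_zero]; exact hhS')
  rw [sub_zero] at ha'
  rw [(Submodule.Quotient.mk_eq_zero _).2 (hT' a' ha'), map_zero] at hea'
  rw [sub_zero, sub_self] at ha
  obtain ⟨p, rfl⟩ := mem_gwaComp_zero.1 ha
  obtain ⟨q, hq⟩ := exists_aeval_eq_add (f := f) t p
  have hpc : (Submodule.Quotient.mk (aeval (gwaZ k f) p) : GWA k f ⧸ IT) =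
      Submodule.Quotient.mk (algebraMap k (GWA k f) (p.eval (t : k))) := by
    rw [Submodule.Quotient.eq, hq, add_sub_cancel_left]
    exact mul_mem_of_mem hT _
  rw [hpc] at hea
  refine ⟨e, he, hπ, hea', _, fun hc => hns ?_, hea⟩
  refine hext.splits hIS he hπ ?_ hea'
  rw [hea, hc, map_zero, Submodule.Quotient.mk_zero, map_zero]

/-- Any two nonsplit extensions of `S` by `T` in degree zero are proportional. -/
theorem IsGradedExt.exists_proportional [CharZero k] {ε : ℤ}
    {E E' : ModuleCat.{0} (GWA k f)ᵐᵒᵖ} {gE : ℤ → Set E} {gE' : ℤ → Set E'}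
    {ι : (GWA k f ⧸ IT) →ₗ[(GWA k f)ᵐᵒᵖ] E} {π : E →ₗ[(GWA k f)ᵐᵒᵖ] (GWA k f ⧸ IS)}
    {ι' : (GWA k f ⧸ IT) →ₗ[(GWA k f)ᵐᵒᵖ] E'} {π' : E' →ₗ[(GWA k f)ᵐᵒᵖ] (GWA k f ⧸ IS)}
    (hext : IsGradedExt k f IT t IS s 0 E gE ι π) (hns : ¬ GradedSplits k f IS s E gE π)
    (hext' : IsGradedExt k f IT t IS s 0 E' gE' ι' π')
    (hns' : ¬ GradedSplits k f IS s E' gE' π')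
    (hIS : IS = Submodule.span _ {h, h'}) (hS : gwaZ k f - s ∈ IS)
    (hh : h ∈ gwaComp k f (t - s)) (hh' : h' ∈ gwaComp k f ε) (hT : gwaZ k f - t ∈ IT)
    (hT' : ∀ a ∈ gwaComp k f (s + ε - t), a ∈ IT) :
    ∃ c : k, c ≠ 0 ∧ ∃ ψ : E →ₗ[(GWA k f)ᵐᵒᵖ] E',
      (∀ w : GWA k f ⧸ IT,
        ψ (ι w) = ι' ((MulOpposite.op (algebraMap k (GWA k f) c)) • w)) ∧
      (∀ e : E, π' (ψ e) = π e) ∧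
      (∀ n, ψ '' gE n ⊆ gE' n) := by
  obtain ⟨e, he, hπ, heh', c, hc, heh⟩ := hext.exists_generator hns hIS hS hh hh' hT hT'
  obtain ⟨e', he', hπ', heh₁', c', hc', heh₁⟩ :=
    hext'.exists_generator hns' hIS hS hh hh' hT hT'
  set γ : k := c' * c⁻¹ with hγ
  have hγc : γ * c = c' := by rw [hγ, mul_assoc, inv_mul_cancel₀ hc, mul_one]
  let Φ : (GWA k f × (GWA k f ⧸ IT)) →ₗ[(GWA k f)ᵐᵒᵖ] E := (orbitMap e).coprod ι
  let Φ' : (GWA k f × (GWA k f ⧸ IT)) →ₗ[(GWA k f)ᵐᵒᵖ] E' :=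
    (orbitMap e').coprod (ι' ∘ₗ (γ • LinearMap.id))
  have hΦ (a w) : Φ (a, w) = orbitMap e a + ι w := rfl
  have hΦ' (a w) : Φ' (a, w) = orbitMap e' a + ι' (γ • w) := rfl
  have hmem (n : ℤ) (x : E) (hx : x ∈ gE n) : ∃ a ∈ gwaComp k f (n - s),
      ∃ b ∈ gwaComp k f (n - t), x = Φ (a, Submodule.Quotient.mk b) := by
    obtain ⟨a, ha, hax⟩ := hext.2.2.2.2.2 n ⟨x, hx, rfl⟩
    have hea : -orbitMap e a ∈ gE n :=
      hext.1.2.2.1 n _ (smul_mem_of_eq hext.1 he ha (add_sub_cancel s n))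
    obtain ⟨b, hb, hbx⟩ := hext.exists_of_map_eq_zero (hext.1.2.1 n x hx _ hea)
      (by rw [map_add, map_neg, map_orbitMap hπ, hax, add_neg_cancel])
    rw [sub_zero] at hb
    exact ⟨a, ha, b, hb, by rw [hΦ, ← hbx]; abel⟩
  have hsurj : Function.Surjective Φ := by
    intro x
    obtain ⟨a, ha⟩ := IS.mkQ_surjective (π x)
    have hx : x - orbitMap e a ∈ LinearMap.range ι := by
      rw [hext.2.2.2.1, LinearMap.mem_ker, map_sub, map_orbitMap hπ, ← ha]
      exact sub_self _
    obtain ⟨w, hw⟩ := hx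
    exact ⟨(a, w), by rw [hΦ, hw]; abel⟩
  have hker : LinearMap.ker Φ ≤ LinearMap.ker Φ' := by
    rintro ⟨a, w⟩ haw
    rw [LinearMap.mem_ker, hΦ] at haw
    have ha : a ∈ IS := by
      have := congrArg π haw
      rwa [map_add, map_orbitMap hπ, hext.map_eq_zero, add_zero, map_zero,
        Submodule.Quotient.mk_eq_zero] at this
    rw [hIS] at ha
    obtain ⟨b, b', rfl⟩ := Submodule.mem_span_pair.1 ha
    have hb {M : ModuleCat.{0} (GWA k f)ᵐᵒᵖ} {m : M} {j : (GWA k f ⧸ IT) →ₗ[(GWA k f)ᵐᵒᵖ] M}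
        {r : k} (h0 : MulOpposite.op h' • m = 0)
        (h1 : MulOpposite.op h • m =
          j (Submodule.Quotient.mk (algebraMap k (GWA k f) r))) :
        orbitMap m (b • h + b' • h') = j (b • Submodule.Quotient.mk (algebraMap k _ r)) := by
      rw [map_add, map_smul, map_smul, orbitMap_apply, orbitMap_apply, h0, h1, smul_zero,
        add_zero, map_smul]
    rw [hb heh' heh, ← map_add, map_eq_zero_iff _ hext.2.1] at haw
    rw [LinearMap.mem_ker, hΦ', hb heh₁' heh₁, ← map_add, ← hγc, eq_neg_of_add_eq_zero_right haw,
      map_mul, ← Algebra.smul_def, Submodule.Quotient.mk_smul, smul_neg, smul_comm b γ,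
      add_neg_cancel, map_zero]
  obtain ⟨ψ, hψ⟩ : ∃ ψ : E →ₗ[(GWA k f)ᵐᵒᵖ] E', ∀ p, ψ (Φ p) = Φ' p := by
    refine ⟨(LinearMap.ker Φ).liftQ Φ' hker ∘ₗ
      (Φ.quotKerEquivOfSurjective hsurj).symm.toLinearMap, fun p => ?_⟩
    have : (Φ.quotKerEquivOfSurjective hsurj).symm (Φ p) = Submodule.Quotient.mk p :=
      (LinearEquiv.symm_apply_eq _).2 rfl
    rw [LinearMap.comp_apply, LinearEquiv.coe_coe, this]
    rfl
  refine ⟨γ, mul_ne_zero hc' (inv_ne_zero hc), ψ, fun w => ?_, fun x => ?_, ?_⟩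
  · have := hψ (0, w)
    rw [hΦ, hΦ', map_zero, map_zero, zero_add, zero_add] at this
    rw [this, ← algebraMap_smul (GWA k f)ᵐᵒᵖ γ w]
    rfl
  · obtain ⟨⟨a, w⟩, rfl⟩ := hsurj x
    rw [hψ, hΦ, hΦ', map_add, map_add, map_orbitMap hπ, map_orbitMap hπ', hext.map_eq_zero,
      hext'.map_eq_zero]
  · rintro n _ ⟨x, hx, rfl⟩
    obtain ⟨a, ha, b, hb, rfl⟩ := hmem n x hx
    rw [hψ, hΦ']
    refine hext'.1.2.1 n _ (smul_mem_of_eq hext'.1 he' ha (add_sub_cancel s n)) _ ?_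
    rw [← Submodule.Quotient.mk_smul]
    exact hext'.map_mk_mem (Submodule.smul_mem _ γ hb) (by ring)

end Proportional

section Existence

variable {k f} {IT IS J : Submodule (GWA k f)ᵐᵒᵖ (GWA k f)} {t s : ℤ} {h h' : GWA k f}

/-- If `I_S = hA + h'A` and `J = h'A + hI_T`, then left multiplication by `h` exhibits `A/J` as
an extension of `A/I_S` by `A/I_T`, which does not split as long as `h ∉ J`. -/
theorem exists_nonsplit_isGradedExt [CharZero k] (hIS : IS = Submodule.span _ {h, h'})
    (hS : gwaZ k f - s ∈ IS) (h1S : (1 : GWA k f) ∉ IS) (hh : h ∈ gwaComp k f (t - s))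
    (hT : ∀ i, ∀ a ∈ gwaComp k f i, a ∉ IT → ∃ b, a * b - 1 ∈ IT) (hJS : J ≤ IS)
    (hzJ : (gwaZ k f - s) ^ 2 ∈ J) (hh'J : h' ∈ J) (hTJ : ∀ a ∈ IT, h * a ∈ J) (hJh : h ∉ J)
    (hq : ∀ q : k[X], (gwaZ k f - s) * aeval (gwaZ k f) q * h ∈ J) :
    ∃ (E : ModuleCat.{0} (GWA k f)ᵐᵒᵖ) (gE : ℤ → Set E)
      (ι : (GWA k f ⧸ IT) →ₗ[(GWA k f)ᵐᵒᵖ] E)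
      (π : E →ₗ[(GWA k f)ᵐᵒᵖ] (GWA k f ⧸ IS)),
      IsGradedExt k f IT t IS s 0 E gE ι π ∧ ¬GradedSplits k f IS s E gE π := by
  have hhS : h ∈ IS := hIS ▸ Submodule.subset_span (Set.mem_insert _ _)
  let ι : (GWA k f ⧸ IT) →ₗ[(GWA k f)ᵐᵒᵖ] (GWA k f ⧸ J) :=
    IT.liftQ (J.mkQ ∘ₗ orbitMap h) fun a ha => (Submodule.Quotient.mk_eq_zero J).2 (hTJ a ha)
  let π : (GWA k f ⧸ J) →ₗ[(GWA k f)ᵐᵒᵖ] (GWA k f ⧸ IS) :=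
    J.liftQ IS.mkQ (by rwa [Submodule.ker_mkQ])
  have hι (a : GWA k f) : ι (Submodule.Quotient.mk a) = Submodule.Quotient.mk (h * a) := rfl
  have hπ (a : GWA k f) : π (Submodule.Quotient.mk a) = Submodule.Quotient.mk a := rfl
  have hhom (i : ℤ) (a : GWA k f) (ha : a ∈ gwaComp k f i) (hJa : h * a ∈ J) : a ∈ IT := by
    by_contra hc
    obtain ⟨b, hb⟩ := hT i a ha hc
    apply hJh
    have := sub_mem (mul_mem_of_mem hJa b) (hTJ _ hb)
    rwa [mul_sub, mul_one, mul_assoc, sub_sub_cancel] at this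
  refine ⟨ModuleCat.of _ (GWA k f ⧸ J), qgrade k f J s, ι, π,
    ⟨isGrading_qgrade hzJ, ?_, ?_, ?_, ?_, ?_⟩, ?_⟩
  · refine (injective_iff_map_eq_zero ι).2 fun w hw => ?_
    obtain ⟨a, rfl⟩ := IT.mkQ_surjective w
    obtain ⟨S, cc, hcc, rfl⟩ := exists_sum_gwaComp t a
    rw [map_sum, map_sum] at hw
    rw [map_sum]
    refine Finset.sum_eq_zero fun n hn => ?_
    refine (Submodule.Quotient.mk_eq_zero IT).2 (hhom _ _ (hcc n) ?_)
    refine (Submodule.Quotient.mk_eq_zero J).1 (qgrade_sum_eq_zero hzJ S _ (fun m _ => ?_) hw n hn)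
    refine ⟨h * cc m, ?_, rfl⟩
    have := mul_mem_gwaComp hh (hcc m)
    rwa [show t - s + (m - t) = m - s by ring] at this
  · intro w
    obtain ⟨a, rfl⟩ := IS.mkQ_surjective w
    exact ⟨Submodule.Quotient.mk a, rfl⟩
  · apply le_antisymm
    · rintro _ ⟨w, rfl⟩
      obtain ⟨a, rfl⟩ := IT.mkQ_surjective w
      exact (Submodule.Quotient.mk_eq_zero IS).2 (mul_mem_of_mem hhS a)
    · intro w hw
      obtain ⟨a, rfl⟩ := J.mkQ_surjective w
      have ha : a ∈ IS := (Submodule.Quotient.mk_eq_zero IS).1 hw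
      rw [hIS] at ha
      obtain ⟨b, b', rfl⟩ := Submodule.mem_span_pair.1 ha
      refine ⟨Submodule.Quotient.mk b.unop, ?_⟩
      rw [hι]
      refine (Submodule.Quotient.eq J).2 ?_
      have : h * b.unop - (b • h + b' • h') = -(b' • h') := by
        rw [sub_add_eq_sub_sub, neg_eq_zero_sub]
        congr 1
        exact sub_self _
      rw [this]
      exact neg_mem (J.smul_mem _ hh'J)
  · rintro n _ ⟨_, ⟨a, ha, rfl⟩, rfl⟩
    refine ⟨h * a, ?_, rfl⟩
    have := mul_mem_gwaComp hh ha
    rwa [show t - s + (n - 0 - t) = n - s by ring] at this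
  · rintro n _ ⟨_, ⟨a, ha, rfl⟩, rfl⟩
    exact ⟨a, ha, rfl⟩
  · rintro ⟨sec, hsec, hgr⟩
    obtain ⟨b, hb, hb1⟩ := hgr s ⟨Submodule.Quotient.mk 1,
      ⟨1, by rw [sub_self]; exact one_mem_gwaComp, rfl⟩, rfl⟩
    rw [sub_self] at hb
    obtain ⟨p, rfl⟩ := mem_gwaComp_zero.1 hb
    have hp1 : aeval (gwaZ k f) p - 1 ∈ IS := by
      have := LinearMap.congr_fun hsec (Submodule.Quotient.mk 1)
      rw [LinearMap.comp_apply, ← hb1] at this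
      exact (Submodule.Quotient.eq IS).1 this
    have hph : aeval (gwaZ k f) p * h ∈ J := by
      have h0 : MulOpposite.op h • (Submodule.Quotient.mk 1 : GWA k f ⧸ IS) = 0 := by
        rw [op_smul_mk, one_mul]
        exact (Submodule.Quotient.mk_eq_zero IS).2 hhS
      have := congrArg sec h0
      rw [map_smul, ← hb1, map_zero] at this
      exact (Submodule.Quotient.mk_eq_zero J).1 this
    obtain ⟨q, hpq⟩ := exists_aeval_eq_add (f := f) s p
    have hc : p.eval (s : k) ≠ 0 := by
      intro hc
      rw [hc, map_zero, zero_add] at hpq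
      apply h1S
      have := sub_mem (mul_mem_of_mem hS (aeval (gwaZ k f) q)) hp1
      rwa [hpq, sub_sub_cancel] at this
    rw [hpq, add_mul] at hph
    have := (J.add_mem_iff_left (hq q)).1 hph
    apply hJh
    have h2 := mul_mem_of_mem this (algebraMap k _ (p.eval (s : k))⁻¹)
    rwa [← Algebra.commutes, ← mul_assoc, ← map_mul, inv_mul_cancel₀ hc, map_one, one_mul] at h2

theorem extOneDim_of_generators [CharZero k] {g : GWA k f} {ε δ : ℤ}
    (hg : g ∈ gwaComp k f δ) (hIS : IS = Submodule.span _ {g, gwaZ k f - s})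
    (hIS' : IS = Submodule.span _ {h, h'}) (h1S : (1 : GWA k f) ∉ IS)
    (hh : h ∈ gwaComp k f (t - s)) (hh' : h' ∈ gwaComp k f ε) (hzT : gwaZ k f - t ∈ IT)
    (hT' : ∀ a ∈ gwaComp k f (s + ε - t), a ∈ IT)
    (hT : ∀ i, ∀ a ∈ gwaComp k f i, a ∉ IT → ∃ b, a * b - 1 ∈ IT) (hJS : J ≤ IS)
    (hzJ : (gwaZ k f - s) ^ 2 ∈ J) (hh'J : h' ∈ J) (hTJ : ∀ a ∈ IT, h * a ∈ J) (hJh : h ∉ J)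
    (hq : ∀ q : k[X], (gwaZ k f - s) * aeval (gwaZ k f) q * h ∈ J) :
    ExtOneDim k f IT t IS s := by
  have hS : gwaZ k f - s ∈ IS :=
    hIS ▸ Submodule.subset_span (Set.mem_insert_of_mem _ rfl)
  refine ⟨fun d hd E gE ι π hext => hext.splits_of_ne_zero hIS hg hzT hd,
    exists_nonsplit_isGradedExt hIS' hS h1S hh hT hJS hzJ hh'J hTJ hJh hq, ?_⟩
  intro E gE ι π hext hns E' gE' ι' π' hext' hns'
  exact hext.exists_proportional hns hext' hns' hIS' hS hh hh' hzT hT'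

end Existence

section Representation

variable {k f}

/-- The left representation of `A(f)` on `k[X]` attached to a factorization `f = a · σ(b)`:
`z` acts by multiplication by `X`, `x` by `p ↦ a · p(X + 1)`, and `y` by `p ↦ b · p(X - 1)`. -/
def gwaRep (a b : k[X]) (hab : a * b.comp (X + 1) = f) : GWA k f →ₐ[k] Module.End k k[X] :=
  RingQuot.liftAlgHom k ⟨FreeAlgebra.lift k
    ![Algebra.lmul k k[X] a * (aeval (X + 1 : k[X])).toLinearMap,
      Algebra.lmul k k[X] b * (aeval (X - 1 : k[X])).toLinearMap,
      Algebra.lmul k k[X] X], by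
    have hcomp (p r : k[X]) : aeval r p = p.comp r := rfl
    have hz (q : k[X]) : aeval (Algebra.lmul k k[X] X) q = Algebra.lmul k k[X] q := by
      rw [aeval_algHom_apply, aeval_X_left_apply]
    rintro _ _ (_ | _ | _ | _)
    · refine LinearMap.ext fun p => ?_
      simp [hcomp]
      ring
    · refine LinearMap.ext fun p => ?_
      simp [hcomp]
      ring
    · rw [← aeval_algHom_apply, FreeAlgebra.lift_ι_apply]
      refine Eq.trans (LinearMap.ext fun p => ?_) (hz _).symm
      simp [hcomp, comp_assoc, ← hab]
      ring
    · rw [← aeval_algHom_apply, FreeAlgebra.lift_ι_apply]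
      refine Eq.trans (LinearMap.ext fun p => ?_) (hz _).symm
      simp [hcomp, comp_assoc, ← hab]
      ring⟩

variable {a b : k[X]} (hab : a * b.comp (X + 1) = f)

theorem gwaRep_gwaX (p : k[X]) : gwaRep a b hab (gwaX k f) p = a * p.comp (X + 1) := by
  simp [gwaRep, gwaX, aeval_def, comp, Polynomial.algebraMap_eq]

theorem gwaRep_gwaY (p : k[X]) : gwaRep a b hab (gwaY k f) p = b * p.comp (X - 1) := by
  simp [gwaRep, gwaY, aeval_def, comp, Polynomial.algebraMap_eq]

theorem gwaRep_gwaZ (p : k[X]) : gwaRep a b hab (gwaZ k f) p = X * p := by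
  simp [gwaRep, gwaZ]

theorem dvd_gwaRep_of_mem_span {G : Set (GWA k f)} {D : k[X]}
    (hG : ∀ g ∈ G, ∀ p, D ∣ gwaRep a b hab g p) {w : GWA k f}
    (hw : w ∈ Submodule.span (GWA k f)ᵐᵒᵖ G) : ∀ p, D ∣ gwaRep a b hab w p := by
  induction hw using Submodule.span_induction with
  | mem w hw => exact hG w hw
  | zero => simp
  | add u v _ _ hu hv =>
    intro p
    rw [map_add, LinearMap.add_apply]
    exact dvd_add (hu p) (hv p)
  | smul r u _ hu =>
    intro p
    change D ∣ gwaRep a b hab (u * r.unop) p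
    rw [map_mul, Module.End.mul_apply]
    exact hu _

end Representation

section SimpleModules

variable {k}

theorem exists_mul_sub_one_mem_of_mul_eq {f} {I : Submodule (GWA k f)ᵐᵒᵖ (GWA k f)} {t i : ℤ}
    (hz : gwaZ k f - t ∈ I) {b : GWA k f} {r : k[X]}
    (hb : gwaMon k f i * b = aeval (gwaZ k f) r) (hr : r.eval (t : k) ≠ 0) {a : GWA k f}
    (ha : a ∈ gwaComp k f i) (haI : a ∉ I) : ∃ b, a * b - 1 ∈ I := by
  obtain ⟨p, rfl⟩ := mem_gwaComp.1 ha
  have hp : p.eval (t : k) ≠ 0 := by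
    intro hp
    obtain ⟨q, hq⟩ := exists_aeval_eq_add (f := f) t p
    rw [hp, map_zero, zero_add] at hq
    rw [hq, mul_assoc] at haI
    exact haI (mul_mem_of_mem hz _)
  obtain ⟨q, hq⟩ := exists_aeval_eq_add (f := f) t (p * r)
  refine ⟨b * algebraMap k _ ((p * r).eval (t : k))⁻¹, ?_⟩
  have hpr : (p * r).eval (t : k) ≠ 0 := by
    rw [eval_mul]
    exact mul_ne_zero hp hr
  rw [mul_assoc, ← mul_assoc (gwaMon k f i), hb, ← mul_assoc, ← map_mul, hq, add_mul, ← map_mul,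
    mul_inv_cancel₀ hpr, map_one, add_sub_cancel_left, mul_assoc]
  exact mul_mem_of_mem hz _

theorem mem_of_pos_of_gwaX_mem {f} {I : Submodule (GWA k f)ᵐᵒᵖ (GWA k f)} (hx : gwaX k f ∈ I)
    {j : ℕ} {a : GWA k f} (ha : a ∈ gwaComp k f (j + 1)) : a ∈ I := by
  obtain ⟨p, rfl⟩ := mem_gwaComp.1 ha
  have h := gwaX_pow_mul_aeval (f := f) 1 (p.comp (X - 1))
  rw [comp_assoc] at h
  simp only [pow_one, Nat.cast_one, sub_comp, X_comp, one_comp, add_sub_cancel_right,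
    comp_X] at h
  rw [← Nat.cast_succ, gwaMon_natCast, pow_succ', ← mul_assoc, ← h, mul_assoc]
  exact mul_mem_of_mem hx _

theorem mem_of_neg_of_gwaY_mem {f} {I : Submodule (GWA k f)ᵐᵒᵖ (GWA k f)} (hy : gwaY k f ∈ I)
    {j : ℕ} {a : GWA k f} (ha : a ∈ gwaComp k f (-((j + 1 : ℕ) : ℤ))) : a ∈ I := by
  obtain ⟨p, rfl⟩ := mem_gwaComp.1 ha
  have h := gwaY_pow_mul_aeval (f := f) 1 (p.comp (X + 1))
  rw [comp_assoc] at h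
  simp only [pow_one, Nat.cast_one, add_comp, X_comp, one_comp, sub_add_cancel,
    comp_X] at h
  rw [gwaMon_neg_natCast, pow_succ', ← mul_assoc, ← h, mul_assoc]
  exact mul_mem_of_mem hy _

variable [CharZero k]

theorem exists_gwaY_pow_mul_gwaX_pow (j : ℕ) :
    ∃ r : k[X], gwaY k (X ^ 2) ^ j * gwaX k (X ^ 2) ^ j = aeval (gwaZ k (X ^ 2)) r ∧
      ∀ m : ℕ, r.eval (-(m : k)) ≠ 0 := by
  induction j with
  | zero => exact ⟨1, by simp, by simp⟩
  | succ j ih =>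
    obtain ⟨r, hr, hr0⟩ := ih
    refine ⟨r.comp (X - 1) * (X ^ 2 : k[X]).comp (X - 1), ?_, fun m => ?_⟩
    · have h := gwaY_pow_mul_aeval (f := X ^ 2) 1 r
      simp only [pow_one, Nat.cast_one] at h
      rw [pow_succ' (gwaY k _), pow_succ (gwaX k _), mul_assoc, ← mul_assoc (_ ^ j), hr,
        ← mul_assoc, h, mul_assoc,
        gwaY_mul_gwaX, map_mul]
    · have h1 : -(m : k) - 1 = -((m + 1 : ℕ) : k) := by push_cast; ring
      simp only [eval_mul, eval_comp, eval_sub, eval_X, eval_one, eval_pow, h1]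
      exact mul_ne_zero (hr0 _) (pow_ne_zero _ (neg_ne_zero.2 (Nat.cast_ne_zero.2 (by omega))))

theorem exists_gwaX_pow_mul_gwaY_pow (j : ℕ) :
    ∃ r : k[X], gwaX k (X ^ 2) ^ j * gwaY k (X ^ 2) ^ j = aeval (gwaZ k (X ^ 2)) r ∧
      ∀ m : ℕ, r.eval ((m + 1 : ℕ) : k) ≠ 0 := by
  induction j with
  | zero => exact ⟨1, by simp, by simp⟩
  | succ j ih =>
    obtain ⟨r, hr, hr0⟩ := ih
    refine ⟨r.comp (X + 1) * X ^ 2, ?_, fun m => ?_⟩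
    · have h := gwaX_pow_mul_aeval (f := X ^ 2) 1 r
      simp only [pow_one, Nat.cast_one] at h
      rw [pow_succ' (gwaX k _), pow_succ (gwaY k _), mul_assoc, ← mul_assoc (_ ^ j), hr,
        ← mul_assoc, h, mul_assoc,
        gwaX_mul_gwaY, map_mul]
    · have h1 : ((m + 1 : ℕ) : k) + 1 = ((m + 1 + 1 : ℕ) : k) := by push_cast; ring
      simp only [eval_mul, eval_comp, eval_add, eval_X, eval_one, eval_pow, h1]
      exact mul_ne_zero (hr0 _) (pow_ne_zero _ (Nat.cast_ne_zero.2 (by omega)))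

/-- Every homogeneous element of `A` outside `(x, z)A` is invertible modulo `(x, z)A`. -/
theorem exists_mul_sub_one_mem_of_gwaX_mem
    {I : Submodule (GWA k (X ^ 2))ᵐᵒᵖ (GWA k (X ^ 2))} (hx : gwaX k (X ^ 2) ∈ I)
    (hz : gwaZ k (X ^ 2) - (0 : ℤ) ∈ I) (i : ℤ) (a : GWA k (X ^ 2))
    (ha : a ∈ gwaComp k (X ^ 2) i) (haI : a ∉ I) : ∃ b, a * b - 1 ∈ I := by
  obtain ⟨j, rfl | rfl⟩ := i.eq_nat_or_neg
  · cases j with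
    | zero =>
      exact exists_mul_sub_one_mem_of_mul_eq hz (b := 1) (r := 1) (by simp [gwaMon]) (by simp)
        ha haI
    | succ j => exact (haI (mem_of_pos_of_gwaX_mem hx (by simpa using ha))).elim
  · obtain ⟨r, hr, hr0⟩ := exists_gwaY_pow_mul_gwaX_pow (k := k) j
    refine exists_mul_sub_one_mem_of_mul_eq hz (by rw [gwaMon_neg_natCast, hr]) ?_ ha haI
    simpa using hr0 0

/-- Every homogeneous element of `A` outside `(y, z - 1)A` is invertible modulo
`(y, z - 1)A`. -/
theorem exists_mul_sub_one_mem_of_gwaY_mem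
    {I : Submodule (GWA k (X ^ 2))ᵐᵒᵖ (GWA k (X ^ 2))} (hy : gwaY k (X ^ 2) ∈ I)
    (hz : gwaZ k (X ^ 2) - (1 : ℤ) ∈ I) (i : ℤ) (a : GWA k (X ^ 2))
    (ha : a ∈ gwaComp k (X ^ 2) i) (haI : a ∉ I) : ∃ b, a * b - 1 ∈ I := by
  obtain ⟨j, rfl | rfl⟩ := i.eq_nat_or_neg
  · obtain ⟨r, hr, hr0⟩ := exists_gwaX_pow_mul_gwaY_pow (k := k) j
    refine exists_mul_sub_one_mem_of_mul_eq hz (by rw [gwaMon_natCast, hr]) ?_ ha haI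
    simpa using hr0 0
  · cases j with
    | zero =>
      exact exists_mul_sub_one_mem_of_mul_eq hz (b := 1) (r := 1) (by simp [gwaMon]) (by simp)
        ha haI
    | succ j => exact (haI (mem_of_neg_of_gwaY_mem hy ha)).elim

end SimpleModules

theorem mul_mem_of_mem_span_pair {f} {J : Submodule (GWA k f)ᵐᵒᵖ (GWA k f)} {h u v : GWA k f}
    (hu : h * u ∈ J) (hv : h * v ∈ J) :
    ∀ a ∈ Submodule.span (GWA k f)ᵐᵒᵖ {u, v}, h * a ∈ J := by
  have : Submodule.span (GWA k f)ᵐᵒᵖ {u, v} ≤ J.comap (orbitMap h) := by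
    refine Submodule.span_le.2 ?_
    rintro _ (rfl | rfl)
    exacts [hu, hv]
  exact this

section NonMembership

variable {k}

theorem sq_mul_one_comp : (X ^ 2 : k[X]) * (1 : k[X]).comp (X + 1) = X ^ 2 := by simp

theorem one_mul_sq_comp : (1 : k[X]) * ((X - 1) ^ 2 : k[X]).comp (X + 1) = X ^ 2 := by simp

theorem not_isUnit_X_sub_one : ¬ IsUnit (X - 1 : k[X]) := by
  simpa using not_isUnit_X_sub_C (1 : k)

theorem X_sub_one_ne_zero : (X - 1 : k[X]) ≠ 0 := by
  simpa using X_sub_C_ne_zero (1 : k)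

theorem one_notMem_span_gwaX_gwaZ :
    (1 : GWA k (X ^ 2)) ∉
      Submodule.span (GWA k (X ^ 2))ᵐᵒᵖ {gwaX k (X ^ 2), gwaZ k (X ^ 2)} := by
  intro h
  have := dvd_gwaRep_of_mem_span sq_mul_one_comp (D := X) (by
    rintro _ (rfl | rfl) p
    · rw [gwaRep_gwaX]
      exact Dvd.dvd.mul_right (dvd_pow_self _ two_ne_zero) _
    · rw [gwaRep_gwaZ]
      exact dvd_mul_right _ _) h 1
  rw [map_one (gwaRep _ _ _), Module.End.one_apply] at this
  exact not_isUnit_X (isUnit_of_dvd_one this)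

theorem one_notMem_span_gwaY_gwaZ :
    (1 : GWA k (X ^ 2)) ∉
      Submodule.span (GWA k (X ^ 2))ᵐᵒᵖ {gwaY k (X ^ 2), gwaZ k (X ^ 2) - 1} := by
  intro h
  have := dvd_gwaRep_of_mem_span one_mul_sq_comp (D := X - 1) (by
    rintro _ (rfl | rfl) p
    · rw [gwaRep_gwaY]
      exact Dvd.dvd.mul_right (dvd_pow_self _ two_ne_zero) _
    · rw [map_sub, LinearMap.sub_apply, gwaRep_gwaZ, map_one, Module.End.one_apply]
      exact ⟨p, by ring⟩) h 1
  rw [map_one (gwaRep _ _ _), Module.End.one_apply] at this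
  exact not_isUnit_X_sub_one (isUnit_of_dvd_one this)

theorem gwaZ_notMem_span :
    gwaZ k (X ^ 2) ∉
      Submodule.span (GWA k (X ^ 2))ᵐᵒᵖ {gwaX k (X ^ 2), gwaZ k (X ^ 2) ^ 2} := by
  intro h
  have := dvd_gwaRep_of_mem_span sq_mul_one_comp (D := X ^ 2) (by
    rintro _ (rfl | rfl) p
    · rw [gwaRep_gwaX]
      exact dvd_mul_right _ _
    · rw [pow_two (gwaZ k _), map_mul, Module.End.mul_apply, gwaRep_gwaZ, gwaRep_gwaZ]
      exact ⟨p, by ring⟩) h 1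
  rw [gwaRep_gwaZ, mul_one] at this
  have h2 := (pow_dvd_pow_iff X_ne_zero not_isUnit_X).1 (this.trans (pow_one X).symm.dvd)
  omega

theorem gwaZ_sub_one_notMem_span :
    gwaZ k (X ^ 2) - 1 ∉
      Submodule.span (GWA k (X ^ 2))ᵐᵒᵖ {gwaY k (X ^ 2), (gwaZ k (X ^ 2) - 1) ^ 2} := by
  intro h
  have := dvd_gwaRep_of_mem_span one_mul_sq_comp (D := (X - 1) ^ 2) (by
    rintro _ (rfl | rfl) p
    · rw [gwaRep_gwaY]
      exact dvd_mul_right _ _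
    · rw [pow_two (gwaZ k _ - 1), map_mul, Module.End.mul_apply, map_sub, LinearMap.sub_apply,
        LinearMap.sub_apply, gwaRep_gwaZ, gwaRep_gwaZ, map_one (gwaRep _ _ _),
        Module.End.one_apply, Module.End.one_apply]
      exact ⟨p, by ring⟩) h 1
  rw [map_sub, LinearMap.sub_apply, gwaRep_gwaZ, map_one (gwaRep _ _ _), Module.End.one_apply,
    mul_one] at this
  have h2 := (pow_dvd_pow_iff X_sub_one_ne_zero not_isUnit_X_sub_one).1
    (this.trans (pow_one _).symm.dvd)
  omega

theorem gwaX_notMem_span :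
    gwaX k (X ^ 2) ∉ Submodule.span (GWA k (X ^ 2))ᵐᵒᵖ {gwaZ k (X ^ 2)} := by
  intro h
  have := dvd_gwaRep_of_mem_span one_mul_sq_comp (D := X) (by
    rintro _ rfl p
    rw [gwaRep_gwaZ]
    exact dvd_mul_right _ _) h 1
  rw [gwaRep_gwaX, one_comp, mul_one] at this
  exact not_isUnit_X (isUnit_of_dvd_one this)

theorem gwaY_notMem_span :
    gwaY k (X ^ 2) ∉ Submodule.span (GWA k (X ^ 2))ᵐᵒᵖ {gwaZ k (X ^ 2) - 1} := by
  intro h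
  have := dvd_gwaRep_of_mem_span sq_mul_one_comp (D := X - 1) (by
    rintro _ rfl p
    rw [map_sub, LinearMap.sub_apply, gwaRep_gwaZ, map_one, Module.End.one_apply]
    exact ⟨p, by ring⟩) h 1
  rw [gwaRep_gwaY, one_comp, mul_one] at this
  exact not_isUnit_X_sub_one (isUnit_of_dvd_one this)

end NonMembership

set_option maxHeartbeats 1000000 in
/-- Let `α = 0`, `f = z²`.  As graded vector spaces, `Ext¹_A(X, Y)`,
`Ext¹_A(Y, X)`, `Ext¹_A(X, X)` and `Ext¹_A(Y, Y)` are each one-dimensional over `k`,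
concentrated in degree `0`, where `X = A/(x,z)A` and `Y = (A/(y,z−1)A)⟨1⟩` are the
integrally supported graded simple modules.  (`Ext¹_A(M,N) = ⊕_d Ext¹_{gr A}(M, N⟨d⟩)`,
encoded via graded extensions as in `ExtOneDim`.) -/
theorem ext_one_dimensional_multiple_root
    (k : Type) [Field k] [IsAlgClosed k] [CharZero k] :
    letI IX : Submodule (GWA k (X ^ 2))ᵐᵒᵖ (GWA k (X ^ 2)) :=
      Submodule.span (GWA k (X ^ 2))ᵐᵒᵖ {gwaX k (X ^ 2), gwaZ k (X ^ 2)}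
    letI IY : Submodule (GWA k (X ^ 2))ᵐᵒᵖ (GWA k (X ^ 2)) :=
      Submodule.span (GWA k (X ^ 2))ᵐᵒᵖ {gwaY k (X ^ 2), gwaZ k (X ^ 2) - 1}
    ExtOneDim k (X ^ 2) IY 1 IX 0 ∧
    ExtOneDim k (X ^ 2) IX 0 IY 1 ∧
    ExtOneDim k (X ^ 2) IX 0 IX 0 ∧
    ExtOneDim k (X ^ 2) IY 1 IY 1 := by
  let IX : Submodule (GWA k (X ^ 2))ᵐᵒᵖ (GWA k (X ^ 2)) :=
    Submodule.span (GWA k (X ^ 2))ᵐᵒᵖ {gwaX k (X ^ 2), gwaZ k (X ^ 2)}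
  let IY : Submodule (GWA k (X ^ 2))ᵐᵒᵖ (GWA k (X ^ 2)) :=
    Submodule.span (GWA k (X ^ 2))ᵐᵒᵖ {gwaY k (X ^ 2), gwaZ k (X ^ 2) - 1}
  change ExtOneDim k (X ^ 2) IY 1 IX 0 ∧ ExtOneDim k (X ^ 2) IX 0 IY 1 ∧
    ExtOneDim k (X ^ 2) IX 0 IX 0 ∧ ExtOneDim k (X ^ 2) IY 1 IY 1
  have hz0 : gwaZ k (X ^ 2) - ((0 : ℤ) : GWA k (X ^ 2)) = gwaZ k (X ^ 2) := by simp
  have hz1 : gwaZ k (X ^ 2) - ((1 : ℤ) : GWA k (X ^ 2)) = gwaZ k (X ^ 2) - 1 := by simp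
  have hxX : gwaX k (X ^ 2) ∈ IX := Submodule.subset_span (Set.mem_insert _ _)
  have hzX : gwaZ k (X ^ 2) - ((0 : ℤ) : GWA k (X ^ 2)) ∈ IX :=
    hz0.symm ▸ (Submodule.subset_span (Set.mem_insert_of_mem _ rfl) : gwaZ k (X ^ 2) ∈ IX)
  have hyY : gwaY k (X ^ 2) ∈ IY := Submodule.subset_span (Set.mem_insert _ _)
  have hzY : gwaZ k (X ^ 2) - ((1 : ℤ) : GWA k (X ^ 2)) ∈ IY :=
    hz1 ▸ Submodule.subset_span (Set.mem_insert_of_mem _ rfl)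
  have hIX : IX = Submodule.span _ {gwaX k (X ^ 2), gwaZ k (X ^ 2) - (0 : ℤ)} := by rw [hz0]
  have hIY : IY = Submodule.span _ {gwaY k (X ^ 2), gwaZ k (X ^ 2) - (1 : ℤ)} := by rw [hz1]
  have hX1 : ∀ a ∈ gwaComp k (X ^ 2) 1, a ∈ IX := fun a ha =>
    mem_of_pos_of_gwaX_mem (j := 0) hxX (by simpa using ha)
  have hY1 : ∀ a ∈ gwaComp k (X ^ 2) (-1), a ∈ IY := fun a ha =>
    mem_of_neg_of_gwaY_mem (j := 0) hyY (by simpa using ha)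
  have hzc : gwaZ k (X ^ 2) ∈ gwaComp k (X ^ 2) 0 := mem_gwaComp_zero.2 ⟨X, by simp⟩
  have hzc1 : gwaZ k (X ^ 2) - 1 ∈ gwaComp k (X ^ 2) 0 :=
    mem_gwaComp_zero.2 ⟨X - 1, by simp⟩
  have hcomm (q : k[X]) : aeval (gwaZ k (X ^ 2)) q * gwaZ k (X ^ 2) =
      gwaZ k (X ^ 2) * aeval (gwaZ k (X ^ 2)) q := by
    simpa using congrArg (aeval (gwaZ k (X ^ 2))) (mul_comm q X)
  have hzx : gwaZ k (X ^ 2) * gwaX k (X ^ 2) = gwaX k (X ^ 2) * (gwaZ k (X ^ 2) - 1) := by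
    rw [mul_sub, gwaX_mul_gwaZ]
    noncomm_ring
  have hzy : (gwaZ k (X ^ 2) - 1) * gwaY k (X ^ 2) = gwaY k (X ^ 2) * gwaZ k (X ^ 2) :=
    gwaY_mul_gwaZ.symm
  refine ⟨?_, ?_, ?_, ?_⟩
  · have hJ : gwaZ k (X ^ 2) ∈ Submodule.span (GWA k (X ^ 2))ᵐᵒᵖ {gwaZ k (X ^ 2)} :=
      Submodule.mem_span_singleton_self _
    refine extOneDim_of_generators (h := gwaX k (X ^ 2)) (h' := gwaZ k (X ^ 2))
      (J := Submodule.span _ {gwaZ k (X ^ 2)}) gwaX_mem_gwaComp hIX rfl one_notMem_span_gwaX_gwaZ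
      gwaX_mem_gwaComp hzc hzY hY1 (exists_mul_sub_one_mem_of_gwaY_mem hyY hzY)
      (Submodule.span_mono (by simp)) ?_ hJ (mul_mem_of_mem_span_pair k ?_ ?_) gwaX_notMem_span
      fun q => ?_
    · rw [hz0, pow_two (gwaZ k _)]
      exact mul_mem_of_mem hJ _
    · rw [gwaX_mul_gwaY, map_pow, aeval_X, pow_two (gwaZ k _)]
      exact mul_mem_of_mem hJ _
    · rw [← hzx]
      exact mul_mem_of_mem hJ _
    · rw [hz0, mul_assoc]
      exact mul_mem_of_mem hJ _
  · have hJ : gwaZ k (X ^ 2) - 1 ∈ Submodule.span (GWA k (X ^ 2))ᵐᵒᵖ {gwaZ k (X ^ 2) - 1} :=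
      Submodule.mem_span_singleton_self _
    refine extOneDim_of_generators (h := gwaY k (X ^ 2)) (h' := gwaZ k (X ^ 2) - 1)
      (J := Submodule.span _ {gwaZ k (X ^ 2) - 1}) gwaY_mem_gwaComp hIY rfl
      one_notMem_span_gwaY_gwaZ gwaY_mem_gwaComp hzc1 hzX hX1
      (exists_mul_sub_one_mem_of_gwaX_mem hxX hzX) (Submodule.span_mono (by simp)) ?_ hJ
      (mul_mem_of_mem_span_pair k ?_ ?_) gwaY_notMem_span fun q => ?_
    · rw [hz1, pow_two (gwaZ k _ - 1)]
      exact mul_mem_of_mem hJ _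
    · rw [gwaY_mul_gwaX, X_pow_comp, map_pow, map_sub, aeval_X, map_one, pow_two (gwaZ k _ - 1)]
      exact mul_mem_of_mem hJ _
    · rw [← hzy]
      exact mul_mem_of_mem hJ _
    · rw [hz1, mul_assoc]
      exact mul_mem_of_mem hJ _
  · set J := Submodule.span (GWA k (X ^ 2))ᵐᵒᵖ {gwaX k (X ^ 2), gwaZ k (X ^ 2) ^ 2}
    have hxJ : gwaX k (X ^ 2) ∈ J := Submodule.subset_span (Set.mem_insert _ _)
    have hzJ : gwaZ k (X ^ 2) ^ 2 ∈ J := Submodule.subset_span (Set.mem_insert_of_mem _ rfl)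
    refine extOneDim_of_generators (h := gwaZ k (X ^ 2)) (h' := gwaX k (X ^ 2)) (J := J)
      gwaX_mem_gwaComp hIX (by rw [Set.pair_comm]) one_notMem_span_gwaX_gwaZ
      hzc gwaX_mem_gwaComp hzX hX1 (exists_mul_sub_one_mem_of_gwaX_mem hxX hzX)
      (Submodule.span_le.2 ?_) (hz0.symm ▸ hzJ) hxJ (mul_mem_of_mem_span_pair k ?_ ?_)
      gwaZ_notMem_span fun q => ?_
    · rintro _ (rfl | rfl)
      · exact hxX
      · rw [pow_two (gwaZ k _)]
        exact mul_mem_of_mem (hz0 ▸ hzX) _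
    · rw [hzx]
      exact mul_mem_of_mem hxJ _
    · rwa [← pow_two]
    · rw [hz0, mul_assoc, hcomm, ← mul_assoc, ← pow_two]
      exact mul_mem_of_mem hzJ _
  · set J := Submodule.span (GWA k (X ^ 2))ᵐᵒᵖ {gwaY k (X ^ 2), (gwaZ k (X ^ 2) - 1) ^ 2}
    have hyJ : gwaY k (X ^ 2) ∈ J := Submodule.subset_span (Set.mem_insert _ _)
    have hzJ : (gwaZ k (X ^ 2) - 1) ^ 2 ∈ J :=
      Submodule.subset_span (Set.mem_insert_of_mem _ rfl)
    refine extOneDim_of_generators (h := gwaZ k (X ^ 2) - 1) (h' := gwaY k (X ^ 2)) (J := J)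
      gwaY_mem_gwaComp hIY (by rw [Set.pair_comm]) one_notMem_span_gwaY_gwaZ
      hzc1 gwaY_mem_gwaComp hzY hY1 (exists_mul_sub_one_mem_of_gwaY_mem hyY hzY)
      (Submodule.span_le.2 ?_) (hz1.symm ▸ hzJ) hyJ (mul_mem_of_mem_span_pair k ?_ ?_)
      gwaZ_sub_one_notMem_span fun q => ?_
    · rintro _ (rfl | rfl)
      · exact hyY
      · rw [pow_two (gwaZ k _ - 1)]
        exact mul_mem_of_mem (hz1 ▸ hzY) _
    · rw [hzy]
      exact mul_mem_of_mem hyJ _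
    · rwa [← pow_two]
    · rw [hz1, mul_assoc, mul_sub _ (gwaZ k (X ^ 2)), hcomm, mul_one, ← sub_one_mul, ← mul_assoc,
        ← pow_two]
      exact mul_mem_of_mem hzJ _

end
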